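/- arXiv:1510.03464 — 2 statements merged into one kernel-verified Lean document; each statement's English description precedes it below -/
import Mathlib

section
/- Let X be a finite m-almost quasigroup quandle such that for each a ∈ X the stabilizer S_a is a trivial subquandle of X. For 2 ≤ j ≤ n define E_n^j : C_n^R(X) → C_{n+1}^R(X) on generators x = (x_1,…,x_n) by E_n^j(x) = Σ_{k=1}^m Σ_{y∈X} (x_j^{(k)},…,x_j^{(k)}, y, x_j, x_{j+1},…,x_n), where the first j−1 entries equal x_j^{(k)}. Then ∂_{n+1}∘E_n^j + E_{n−1}^j∘∂_n = (−1)^j(|X|·g_1^j − m·g_s^{j−1}) as maps C_n^R(X) → C_n^R(X). -/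
/-!
Write `∂ = ∑ᵢ (-1)ⁱ δᵢ`, where `δᵢ` is the difference of the two `i`-th face maps. On the tuple
`(k, …, k, y, x_j, …)` the summands `δᵢ` with `i < j` vanish since `k * k = k`, and `δ_{j+1}`
vanishes after summing over `y`, since `k * x_j = k` and `y ↦ y * x_j` permutes `X`. For `i > j`,
right translation by `x_i` carries `S_{x_j}` onto `S_{x_j * x_i}`, so `δ_{i+1} E = E δᵢ`, and these
two terms enter with opposite signs; for `i ≤ j` the two faces agree from the `j`-th entry on,
which is all that `E` sees, so `E δᵢ = 0`. Only `δ_j E` survives. Its first half is `|X| g₁`. For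
the second, `y ↦ k * y` is `k` on `S_k` and permutes the complement of `S_k`; since
`S_k = S_{x_j}` for all `k ∈ S_{x_j}`, summing over these `m` values of `k` gives every element
of `X` exactly `m` times.
-/

/-- The `n`-th rack chain group: the free abelian group on `n`-tuples of `X`. -/
abbrev RackChain (X : Type) (n : ℕ) : Type := FreeAbelianGroup (Fin n → X)

/-- The face map `d_i^{(*_0)}` deleting the `i`-th entry (0-indexed). -/
def dZero {X : Type} (n : ℕ) (i : Fin (n + 1)) (x : Fin (n + 1) → X) :
    Fin n → X :=
  fun j => if (j : ℕ) < (i : ℕ) then x j.castSucc else x j.succ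

/-- The face map `d_i^{(*)}`: entries before position `i` are acted on by `x i`
and the `i`-th entry is deleted (0-indexed). -/
def dStar {X : Type} (op : X → X → X) (n : ℕ) (i : Fin (n + 1))
    (x : Fin (n + 1) → X) : Fin n → X :=
  fun j => if (j : ℕ) < (i : ℕ) then op (x j.castSucc) (x i) else x j.succ

/-- The rack boundary `∂_{n+1} : C_{n+1}^R(X) → C_n^R(X)`,
`∂(x) = Σ_{i=1}^{n+1} (-1)^i (d_i^{(*_0)} x - d_i^{(*)} x)` (with `i` 1-based). -/
def rackBoundary {X : Type} (op : X → X → X) (n : ℕ) :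
    RackChain X (n + 1) →+ RackChain X n :=
  FreeAbelianGroup.lift fun x =>
    ∑ i : Fin (n + 1), ((-1 : ℤ) ^ ((i : ℕ) + 1)) •
      (FreeAbelianGroup.of (dZero n i x) - FreeAbelianGroup.of (dStar op n i x))

/-- The group of rack `(n+1)`-cycles. -/
def rackCycles {X : Type} (op : X → X → X) (n : ℕ) :
    AddSubgroup (RackChain X (n + 1)) :=
  (rackBoundary op n).ker

/-- The group of rack `(n+1)`-boundaries, viewed inside the cycles. -/
def rackBoundaries {X : Type} (op : X → X → X) (n : ℕ) :
    AddSubgroup (rackCycles op n) :=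
  ((rackBoundary op (n + 1)).range).addSubgroupOf (rackCycles op n)

/-- The `(n+1)`-st rack homology group `H_{n+1}^R(X)` (so `n = 0` gives `H_1`). -/
def rackHomology {X : Type} (op : X → X → X) (n : ℕ) : Type :=
  rackCycles (X := X) op n ⧸ rackBoundaries op n

instance {X : Type} (op : X → X → X) (n : ℕ) :
    AddCommGroup (rackHomology op n) :=
  QuotientAddGroup.Quotient.addCommGroup _
/-- The stabilizer `S_a = {x | a * x = a}` as a finset. -/
def stabF {X : Type} [Fintype X] [DecidableEq X] (op : X → X → X) (a : X) :
    Finset X :=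
  Finset.univ.filter fun y => op a y = a

/-- The chain map `g_1^j` (`j` is 1-based, `1 ≤ j ≤ n`; zero otherwise):
`g_1^j(x) = Σ_{k ∈ S_{x_j}} (k, …, k, x_j, x_{j+1}, …, x_n)`
(the first `j-1` entries equal `k`). -/
def g1map {X : Type} [Fintype X] [DecidableEq X] (op : X → X → X) (n j : ℕ) :
    RackChain X n →+ RackChain X n :=
  FreeAbelianGroup.lift fun x =>
    if h : 1 ≤ j ∧ j ≤ n then
      ∑ k ∈ stabF op (x ⟨j - 1, by omega⟩),
        FreeAbelianGroup.of (fun i : Fin n => if (i : ℕ) < j - 1 then k else x i)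
    else 0

/-- The chain map `g_2^j` (`j` is 1-based, `1 ≤ j ≤ n`; zero otherwise):
`g_2^j(x) = Σ_{k ∈ S_{x_j}} (k, …, k, x_{j+1}, …, x_n)`
(the first `j` entries equal `k`). -/
def g2map {X : Type} [Fintype X] [DecidableEq X] (op : X → X → X) (n j : ℕ) :
    RackChain X n →+ RackChain X n :=
  FreeAbelianGroup.lift fun x =>
    if h : 1 ≤ j ∧ j ≤ n then
      ∑ k ∈ stabF op (x ⟨j - 1, by omega⟩),
        FreeAbelianGroup.of (fun i : Fin n => if (i : ℕ) < j then k else x i)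
    else 0

/-- The chain map `g_0^j` (`j` is 1-based, `1 ≤ j ≤ n`; zero otherwise):
`g_0^j(x) = Σ_{k ∈ S_{x_j}} (x_j, …, x_j, k, x_{j+1}, …, x_n)`
(the first `j-1` entries equal `x_j`, the `j`-th entry is `k`). -/
def g0map {X : Type} [Fintype X] [DecidableEq X] (op : X → X → X) (n j : ℕ) :
    RackChain X n →+ RackChain X n :=
  FreeAbelianGroup.lift fun x =>
    if h : 1 ≤ j ∧ j ≤ n then
      ∑ k ∈ stabF op (x ⟨j - 1, by omega⟩),
        FreeAbelianGroup.of (fun i : Fin n =>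
          if (i : ℕ) < j - 1 then x ⟨j - 1, by omega⟩
          else if (i : ℕ) = j - 1 then k else x i)
    else 0

/-- The symmetrizer chain map `g_s^j` (`j` is 1-based):
`g_s^j(x) = Σ_{y ∈ X} (y, …, y, x_{j+1}, …, x_n)` (the first `j` entries equal `y`). -/
def gsmap {X : Type} [Fintype X] [DecidableEq X] (op : X → X → X) (n j : ℕ) :
    RackChain X n →+ RackChain X n :=
  FreeAbelianGroup.lift fun x =>
    ∑ y : X, FreeAbelianGroup.of (fun i : Fin n => if (i : ℕ) < j then y else x i)

/-- The chain homotopy `E_n^j` (`j` 1-based, `2 ≤ j ≤ n`; zero otherwise):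
`E_n^j(x) = Σ_{k ∈ S_{x_j}} Σ_{y ∈ X} (k, …, k, y, x_j, x_{j+1}, …, x_n)`
(the first `j-1` entries equal `k`, then `y`, then `x_j`). -/
def Emap {X : Type} [Fintype X] [DecidableEq X] (op : X → X → X) (n j : ℕ) :
    RackChain X n →+ RackChain X (n + 1) :=
  FreeAbelianGroup.lift fun x =>
    if h : 2 ≤ j ∧ j ≤ n then
      ∑ k ∈ stabF op (x ⟨j - 1, by omega⟩), ∑ y : X,
        FreeAbelianGroup.of (fun i : Fin (n + 1) =>
          if (i : ℕ) < j - 1 then k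
          else if (i : ℕ) = j - 1 then y
          else if (i : ℕ) = j then x ⟨j - 1, by omega⟩
          else x ⟨(i : ℕ) - 1, by have := i.isLt; omega⟩)
    else 0

section FiniteSums

variable {X : Type} [Fintype X] [DecidableEq X] {op : X → X → X} {a b k : X}

theorem mem_stabF : b ∈ stabF op a ↔ op a b = a := by
  simp [stabF]

theorem stabF_op (hbij : Function.Bijective fun x => op x b)
    (hdist : ∀ a b c : X, op (op a b) c = op (op a c) (op b c)) (a : X) :
    stabF op (op a b) = (stabF op a).image (op · b) := by
  ext z
  obtain ⟨y, rfl⟩ := hbij.surjective z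
  simp only [hbij.injective.mem_finset_image, mem_stabF, ← hdist]
  exact hbij.injective.eq_iff

theorem op_eq_self_of_mem_stabF (ha : op a a = a)
    (htriv : ∀ a x y : X, op a x = a → op a y = a → op x y = x) (hk : k ∈ stabF op a) :
    op k a = k :=
  htriv a k a (mem_stabF.1 hk) ha

theorem stabF_eq_of_mem (ha : op a a = a)
    (htriv : ∀ a x y : X, op a x = a → op a y = a → op x y = x) (hk : k ∈ stabF op a) :
    stabF op k = stabF op a := by
  have stabF_subset {b c : X} (hc : op b c = b) : stabF op b ⊆ stabF op c := fun y hy =>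
    mem_stabF.2 (htriv b c y hc (mem_stabF.1 hy))
  exact (stabF_subset (op_eq_self_of_mem_stabF ha htriv hk)).antisymm
    (stabF_subset (mem_stabF.1 hk))

theorem image_op_compl_stabF (ha : op a a = a)
    (hsol : ∀ b : X, op a b ≠ a → ∃ x : X, op a x = b) :
    (stabF op a)ᶜ.image (op a) = (stabF op a)ᶜ := by
  have compl_subset_image : (stabF op a)ᶜ ⊆ (stabF op a)ᶜ.image (op a) := by
    intro b hb
    simp only [Finset.mem_image, Finset.mem_compl, mem_stabF] at hb ⊢
    obtain ⟨x, rfl⟩ := hsol b hb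
    exact ⟨x, fun hx => hb (by rw [hx, ha]), rfl⟩
  exact (Finset.eq_of_subset_of_card_le compl_subset_image Finset.card_image_le).symm

variable {M : Type*} [AddCommMonoid M]

theorem sum_op (ha : op a a = a) (hsol : ∀ b : X, op a b ≠ a → ∃ x : X, op a x = b)
    (f : X → M) :
    ∑ y, f (op a y) = (stabF op a).card • f a + ∑ b ∈ (stabF op a)ᶜ, f b := by
  have himage := image_op_compl_stabF ha hsol
  have hinj : Set.InjOn (op a) ((stabF op a)ᶜ : Finset X) :=
    Finset.card_image_iff.1 (congrArg Finset.card himage)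
  rw [← Finset.sum_add_sum_compl (stabF op a), ← Finset.sum_image hinj, himage,
    ← Finset.sum_const]
  congr 1
  exact Finset.sum_congr rfl fun y hy => by rw [mem_stabF.1 hy]

theorem sum_stabF_sum_op (hidem : ∀ a : X, op a a = a)
    (hsol : ∀ a b : X, op a b ≠ a → ∃ x : X, op a x = b)
    (htriv : ∀ a x y : X, op a x = a → op a y = a → op x y = x) (f : X → M) (a : X) :
    ∑ k ∈ stabF op a, ∑ y, f (op k y) = (stabF op a).card • ∑ y, f y := by
  calc ∑ k ∈ stabF op a, ∑ y, f (op k y)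
      = ∑ k ∈ stabF op a, ((stabF op a).card • f k + ∑ b ∈ (stabF op a)ᶜ, f b) :=
        Finset.sum_congr rfl fun k hk => by
          rw [sum_op (hidem k) (hsol k), stabF_eq_of_mem (hidem a) htriv hk]
    _ = (stabF op a).card • ∑ y, f y := by
        rw [Finset.sum_add_distrib, ← Finset.smul_sum, Finset.sum_const, ← smul_add,
          Finset.sum_add_sum_compl]

end FiniteSums

section Tuples

variable {X : Type} {op : X → X → X} {n p : ℕ}

/-- The tuple `(k, …, k, x_{p+1}, …, x_n)` occurring in `g_1` and `g_s`: the first `p` entries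
of `x` are replaced by `k`. -/
def constPrefix (p : ℕ) (k : X) (x : Fin n → X) : Fin n → X :=
  fun i => if (i : ℕ) < p then k else x i

/-- The tuple `(k, …, k, y, x_{p+1}, …, x_n)` occurring in `E`, with `p` entries `k`. In the
1-based notation for `E_n^j` one has `p = j - 1`. -/
def homotopyTuple (p : ℕ) (k y : X) (x : Fin n → X) : Fin (n + 1) → X :=
  fun i =>
    if hlt : (i : ℕ) < p then k
    else if heq : (i : ℕ) = p then y
    else x ⟨(i : ℕ) - 1, by lia⟩

theorem dStar_apply_of_le {i : Fin (n + 1)} {l : Fin n} (h : (i : ℕ) ≤ l)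
    (x : Fin (n + 1) → X) : dStar op n i x l = dZero n i x l := by
  simp [dStar, dZero, h.not_gt]

theorem dStar_homotopyTuple_of_lt {k : X} (hk : op k k = k) {i : Fin (n + 1)} (hi : (i : ℕ) < p)
    (y : X) (x : Fin n → X) :
    dStar op n i (homotopyTuple p k y x) = dZero n i (homotopyTuple p k y x) := by
  funext l
  grind [dStar, dZero, homotopyTuple]

theorem dZero_homotopyTuple_self {p : Fin (n + 1)} (k y : X) (x : Fin n → X) :
    dZero n p (homotopyTuple p k y x) = constPrefix p k x := by
  funext l
  grind [dZero, homotopyTuple, constPrefix]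

theorem dStar_homotopyTuple_self {p : Fin (n + 1)} (k y : X) (x : Fin n → X) :
    dStar op n p (homotopyTuple p k y x) = constPrefix p (op k y) x := by
  funext l
  grind [dStar, homotopyTuple, constPrefix]

theorem dStar_homotopyTuple_succ {p : Fin n} {k : X} {x : Fin n → X} (hk : op k (x p) = k)
    (y : X) :
    dStar op n p.succ (homotopyTuple p k y x) =
      dZero n p.succ (homotopyTuple p k (op y (x p)) x) := by
  funext l
  grind [dStar, dZero, homotopyTuple]

theorem dZero_homotopyTuple_of_gt {i : Fin (n + 1)} (hi : p < i) (k y : X)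
    (x : Fin (n + 1) → X) :
    dZero (n + 1) i.succ (homotopyTuple p k y x) = homotopyTuple p k y (dZero n i x) := by
  funext l
  grind [dZero, homotopyTuple, Fin.castSucc_mk, Fin.succ_mk]

theorem dStar_homotopyTuple_of_gt {i : Fin (n + 1)} (hi : p < i) (k y : X)
    (x : Fin (n + 1) → X) :
    dStar op (n + 1) i.succ (homotopyTuple p k y x) =
      homotopyTuple p (op k (x i)) (op y (x i)) (dStar op n i x) := by
  funext l
  grind [dStar, homotopyTuple, Fin.castSucc_mk, Fin.succ_mk]

end Tuples

/-- The `i`-th summand `d_i^{(*_0)} - d_i^{(*)}` of the rack boundary, without its sign. -/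
def faceDiff {X : Type} (op : X → X → X) (n : ℕ) (i : Fin (n + 1)) :
    RackChain X (n + 1) →+ RackChain X n :=
  FreeAbelianGroup.lift fun x =>
    FreeAbelianGroup.of (dZero n i x) - FreeAbelianGroup.of (dStar op n i x)

theorem faceDiff_of {X : Type} (op : X → X → X) {n : ℕ} (i : Fin (n + 1))
    (x : Fin (n + 1) → X) :
    faceDiff op n i (FreeAbelianGroup.of x) =
      FreeAbelianGroup.of (dZero n i x) - FreeAbelianGroup.of (dStar op n i x) :=
  FreeAbelianGroup.lift_apply_of _ _

theorem rackBoundary_apply {X : Type} (op : X → X → X) (n : ℕ) (c : RackChain X (n + 1)) :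
    rackBoundary op n c = ∑ i : Fin (n + 1), (-1 : ℤ) ^ ((i : ℕ) + 1) • faceDiff op n i c := by
  have boundary_eq_sum :
      rackBoundary op n = ∑ i : Fin (n + 1), (-1 : ℤ) ^ ((i : ℕ) + 1) • faceDiff op n i := by
    ext x
    simp [rackBoundary, faceDiff_of, AddMonoidHom.finsetSum_apply]
  simp [boundary_eq_sum, AddMonoidHom.finsetSum_apply]

section Generators

variable {X : Type} [Fintype X] [DecidableEq X] (op : X → X → X) {n p : ℕ}

theorem g1map_of (hp : p < n) (x : Fin n → X) :
    g1map op n (p + 1) (FreeAbelianGroup.of x) =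
      ∑ k ∈ stabF op (x ⟨p, hp⟩), FreeAbelianGroup.of (constPrefix p k x) := by
  rw [g1map, FreeAbelianGroup.lift_apply_of, dif_pos (by lia)]
  rfl

theorem gsmap_of (x : Fin n → X) :
    gsmap op n p (FreeAbelianGroup.of x) = ∑ y, FreeAbelianGroup.of (constPrefix p y x) :=
  FreeAbelianGroup.lift_apply_of _ _

theorem Emap_of (hp₀ : 1 ≤ p) (hp : p < n) (x : Fin n → X) :
    Emap op n (p + 1) (FreeAbelianGroup.of x) =
      ∑ k ∈ stabF op (x ⟨p, hp⟩), ∑ y, FreeAbelianGroup.of (homotopyTuple p k y x) := by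
  rw [Emap, FreeAbelianGroup.lift_apply_of, dif_pos (by lia)]
  refine Finset.sum_congr rfl fun k _ => Finset.sum_congr rfl fun y _ => congrArg _ ?_
  funext i
  grind [homotopyTuple]

theorem Emap_of_congr {x x' : Fin n → X} (h : ∀ i : Fin n, p ≤ i → x i = x' i) :
    Emap op n (p + 1) (FreeAbelianGroup.of x) = Emap op n (p + 1) (FreeAbelianGroup.of x') := by
  by_cases hp : 1 ≤ p ∧ p < n
  · have homotopyTuple_congr (k y : X) : homotopyTuple p k y x = homotopyTuple p k y x' := by
      funext i
      grind [homotopyTuple]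
    simp only [Emap_of op hp.1 hp.2, homotopyTuple_congr, h ⟨p, hp.2⟩ le_rfl]
  · have hj : ¬(2 ≤ p + 1 ∧ p + 1 ≤ n) := by lia
    simp only [Emap, FreeAbelianGroup.lift_apply_of, dif_neg hj]

theorem faceDiff_Emap_of (hp₀ : 1 ≤ p) (hp : p < n) (i : Fin (n + 1)) (x : Fin n → X) :
    faceDiff op n i (Emap op n (p + 1) (FreeAbelianGroup.of x)) =
      ∑ k ∈ stabF op (x ⟨p, hp⟩), ∑ y,
        (FreeAbelianGroup.of (dZero n i (homotopyTuple p k y x)) -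
          FreeAbelianGroup.of (dStar op n i (homotopyTuple p k y x))) := by
  simp only [Emap_of op hp₀ hp, map_sum, faceDiff_of]

end Generators

section FaceRelations

variable {X : Type} [Fintype X] [DecidableEq X] {op : X → X → X} {n : ℕ}

theorem Emap_comp_faceDiff_of_le {p : ℕ} {i : Fin (n + 1)} (hi : (i : ℕ) ≤ p) :
    (Emap op n (p + 1)).comp (faceDiff op n i) = 0 := by
  ext x
  simp only [AddMonoidHom.comp_apply, faceDiff_of, map_sub, AddMonoidHom.zero_apply,
    sub_eq_zero]
  exact Emap_of_congr op fun l hl => (dStar_apply_of_le (hi.trans hl) x).symm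

theorem faceDiff_comp_Emap_of_lt (hidem : ∀ a : X, op a a = a) {p : ℕ} (hp : p < n)
    {i : Fin (n + 1)} (hi : (i : ℕ) < p) :
    (faceDiff op n i).comp (Emap op n (p + 1)) = 0 := by
  ext x
  rw [AddMonoidHom.comp_apply, faceDiff_Emap_of op (by lia) hp]
  simp [dStar_homotopyTuple_of_lt (hidem _) hi]

theorem faceDiff_castSucc_comp_Emap {m : ℕ} (hidem : ∀ a : X, op a a = a)
    (hstab : ∀ a : X, (stabF op a).card = m)
    (hsol : ∀ a b : X, op a b ≠ a → ∃ x : X, op a x = b)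
    (htriv : ∀ a x y : X, op a x = a → op a y = a → op x y = x)
    {p : Fin n} (hp₀ : 1 ≤ (p : ℕ)) :
    (faceDiff op n p.castSucc).comp (Emap op n (p + 1)) =
      Fintype.card X • g1map op n (p + 1) - m • gsmap op n p := by
  ext x
  calc faceDiff op n p.castSucc (Emap op n (p + 1) (FreeAbelianGroup.of x))
      = ∑ k ∈ stabF op (x p), ∑ y, (FreeAbelianGroup.of (constPrefix p k x) -
          FreeAbelianGroup.of (constPrefix p (op k y) x)) := by
        rw [faceDiff_Emap_of op hp₀ p.isLt]
        simp only [← Fin.val_castSucc p, dZero_homotopyTuple_self, dStar_homotopyTuple_self]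
        rfl
    _ = Fintype.card X • ∑ k ∈ stabF op (x p), FreeAbelianGroup.of (constPrefix p k x) -
          m • ∑ y, FreeAbelianGroup.of (constPrefix p y x) := by
        simp only [Finset.sum_sub_distrib, Finset.sum_const, Finset.card_univ, Finset.smul_sum]
        rw [sum_stabF_sum_op hidem hsol htriv (fun z => FreeAbelianGroup.of (constPrefix p z x)),
          hstab, Finset.smul_sum]
    _ = (Fintype.card X • g1map op n (p + 1) - m • gsmap op n p) (FreeAbelianGroup.of x) := by
        simp only [AddMonoidHom.sub_apply, AddMonoidHom.smul_apply, g1map_of op p.isLt, gsmap_of]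

theorem faceDiff_succ_comp_Emap (hidem : ∀ a : X, op a a = a)
    (hbij : ∀ b : X, Function.Bijective fun x => op x b)
    (htriv : ∀ a x y : X, op a x = a → op a y = a → op x y = x)
    {p : Fin n} (hp₀ : 1 ≤ (p : ℕ)) :
    (faceDiff op n p.succ).comp (Emap op n (p + 1)) = 0 := by
  ext x
  rw [AddMonoidHom.comp_apply, faceDiff_Emap_of op hp₀ p.isLt, AddMonoidHom.zero_apply]
  refine Finset.sum_eq_zero fun k hk => ?_
  simp only [dStar_homotopyTuple_succ (op_eq_self_of_mem_stabF (hidem (x p)) htriv hk),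
    Finset.sum_sub_distrib, sub_eq_zero]
  exact ((hbij (x p)).sum_comp fun y =>
    FreeAbelianGroup.of (dZero n p.succ (homotopyTuple p k y x))).symm

theorem faceDiff_comp_Emap_of_gt (hbij : ∀ b : X, Function.Bijective fun x => op x b)
    (hdist : ∀ a b c : X, op (op a b) c = op (op a c) (op b c))
    {p : ℕ} (hp₀ : 1 ≤ p) {i : Fin (n + 1)} (hi : p < i) :
    (faceDiff op (n + 1) i.succ).comp (Emap op (n + 1) (p + 1)) =
      (Emap op n (p + 1)).comp (faceDiff op n i) := by
  ext x
  have hp : p < n := by lia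
  have dZero_apply : dZero n i x ⟨p, hp⟩ = x ⟨p, by lia⟩ := by simp [dZero, hi]
  have dStar_apply : dStar op n i x ⟨p, hp⟩ = op (x ⟨p, by lia⟩) (x i) := by simp [dStar, hi]
  rw [AddMonoidHom.comp_apply, AddMonoidHom.comp_apply, faceDiff_Emap_of op hp₀ (by lia),
    faceDiff_of, map_sub, Emap_of op hp₀ hp, Emap_of op hp₀ hp, dZero_apply, dStar_apply,
    stabF_op (hbij _) hdist, Finset.sum_image (hbij _).injective.injOn]
  simp only [Finset.sum_sub_distrib, dZero_homotopyTuple_of_gt hi, dStar_homotopyTuple_of_gt hi]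
  congr 1
  exact Finset.sum_congr rfl fun k _ => (hbij (x i)).sum_comp fun y =>
    FreeAbelianGroup.of (homotopyTuple p (op k (x i)) y (dStar op n i x))

end FaceRelations

theorem alternating_sum_add_alternating_sum {A : Type*} [AddCommGroup A] {n : ℕ}
    (a : Fin (n + 2) → A) (b : Fin (n + 1) → A) (p : Fin (n + 1))
    (ha_lt : ∀ i < p, a i.castSucc = 0) (ha_succ : a p.succ = 0)
    (hb_le : ∀ i ≤ p, b i = 0) (hab : ∀ i, p < i → a i.succ = b i) :
    ∑ i : Fin (n + 2), (-1 : ℤ) ^ ((i : ℕ) + 1) • a i +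
        ∑ i : Fin (n + 1), (-1 : ℤ) ^ ((i : ℕ) + 1) • b i =
      (-1 : ℤ) ^ ((p : ℕ) + 1) • a p.castSucc := by
  rw [Fin.sum_univ_succAbove _ p.succ, ha_succ, smul_zero, zero_add, ← Finset.sum_add_distrib,
    Finset.sum_eq_single p]
  · simp [hb_le p le_rfl]
  · intro i _ hi
    rcases hi.lt_or_gt with hlt | hgt
    · simp [Fin.succAbove_of_castSucc_lt _ _ (Fin.castSucc_lt_succ_iff.2 hlt.le), ha_lt i hlt,
        hb_le i hlt.le]
    · simp [Fin.succAbove_of_lt_succ _ _ (Fin.succ_lt_succ_iff.2 hgt), hab i hgt, pow_succ]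
  · simp

/-- For a finite `m`-almost quasigroup quandle `X` with all
stabilizers trivial subquandles,
`∂_{n+1}∘E_n^j + E_{n-1}^j∘∂_n = (−1)^j(|X|·g_1^j − m·g_s^{j-1})`
as maps `C_n^R(X) → C_n^R(X)` (for `2 ≤ j ≤ n`). -/
theorem mAQ_Emap_homotopy
    {X : Type} [Fintype X] [DecidableEq X] (op : X → X → X) (m : ℕ)
    (hm : 1 ≤ m)
    (hidem : ∀ a : X, op a a = a)
    (hbij : ∀ b : X, Function.Bijective fun x => op x b)
    (hdist : ∀ a b c : X, op (op a b) c = op (op a c) (op b c))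
    (hstab : ∀ a : X, (stabF op a).card = m)
    (hsol : ∀ a b : X, op a b ≠ a → ∃! x : X, op a x = b)
    (htriv : ∀ a x y : X, op a x = a → op a y = a → op x y = x) :
    ∀ (n j : ℕ), 2 ≤ j → j ≤ n + 1 →
      ∀ c : RackChain X (n + 1),
        rackBoundary op (n + 1) (Emap op (n + 1) j c)
            + Emap op n j (rackBoundary op n c)
          = ((-1 : ℤ) ^ j) •
              ((Fintype.card X : ℤ) • g1map op (n + 1) j c
                - (m : ℤ) • gsmap op (n + 1) (j - 1) c) := by
  intro n j hj hjn c
  obtain ⟨p, rfl⟩ : ∃ p : Fin (n + 1), j = p + 1 :=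
    ⟨⟨j - 1, by lia⟩, (Nat.sub_add_cancel (by lia)).symm⟩
  have hp₀ : 1 ≤ (p : ℕ) := by lia
  have hsol' (a b : X) (hb : op a b ≠ a) : ∃ x, op a x = b := (hsol a b hb).exists
  have comp_add_comp := alternating_sum_add_alternating_sum
    (fun i => (faceDiff op (n + 1) i).comp (Emap op (n + 1) (p + 1)))
    (fun i => (Emap op n (p + 1)).comp (faceDiff op n i)) p
    (fun i hi => faceDiff_comp_Emap_of_lt hidem p.isLt hi)
    (faceDiff_succ_comp_Emap hidem hbij htriv hp₀)
    (fun i hi => Emap_comp_faceDiff_of_le hi)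
    (fun i hi => faceDiff_comp_Emap_of_gt hbij hdist hp₀ hi)
  rw [faceDiff_castSucc_comp_Emap hidem hstab hsol' htriv hp₀] at comp_add_comp
  simpa [rackBoundary_apply, AddMonoidHom.finsetSum_apply] using
    DFunLike.congr_fun comp_add_comp c
end

section
/- Let X be a finite m-almost quasigroup quandle such that for every a ∈ X the stabilizer S_a is a trivial subquandle of X. Then for every n ≥ 1, the torsion subgroup of the rack homology group H_n^R(X) is annihilated by N = m·lcm(|X|, |X|−m). -/
/-!
Write `R_{k,e}`, `T_{k,e}` and `S_k` for the linear maps that replace the first `k` entries of a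
tuple `x` by one element `y`, where `y` is `x_e`, or is summed over the stabilizer of `x_e`, or over
all of `X`. Inserting an extra entry `z`, summed over `X`, after the `k` copies of `y` defines a
chain homotopy as soon as `e` is `k` or `k - 1`: deleting an entry before `z` contributes nothing
because `y * y = y`, deleting `z` compares `y` with `y * z`, and the remaining faces commute with
the insertion. The almost quasigroup property evaluates `∑_z y * z`, so on classes of cycles
`|X| R_{k,e} = m R_{k,e} + S_k - T_{k,e}`, and, stabilizers being trivial, `|X| T_{k,e} = m S_k`.
Eliminating `T_{k,e}` yields `N R_{k,e} = M S_k` for `N = m lcm(|X|, |X| - m)` and `M = N / |X|`.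

As `R_{e+1,e} = R_{e,e}`, alternating between the two admissible values of `e` leads from
`R_{0,0} = id` to `N = M S_n` in degree `n`. The map `S_n` only depends on the number of terms of a
chain counted with sign, so it kills boundaries. The chain group being torsion-free, it therefore
also kills every cycle whose class is torsion.
-/

lemma mul_lcm_nsmul_eq_of_nsmul_eq {A : Type*} [AddCommGroup A] {c m : ℕ} {r s t : A}
    (hr : c • r = m • r + (s - t)) (ht : c • t = m • s) :
    (m * Nat.lcm c (c - m)) • r = (m * (Nat.lcm c (c - m) / c)) • s := by
  obtain hcm | hmc := le_total c m
  · simp [Nat.sub_eq_zero_of_le hcm]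
  obtain ⟨d, rfl⟩ := Nat.exists_eq_add_of_le hmc
  rw [Nat.add_sub_cancel_left]
  obtain ⟨p, hp⟩ := Nat.dvd_lcm_right (m + d) d
  have hq := Nat.mul_div_cancel' (Nat.dvd_lcm_left (m + d) d)
  set L := Nat.lcm (m + d) d
  set q := L / (m + d)
  have hr' : d • r = s - t := by
    rw [add_nsmul] at hr
    exact add_left_cancel hr
  calc (m * L) • r = (p * m) • d • r := by rw [hp, smul_smul]; ring_nf
    _ = p • (m • s - m • t) := by rw [hr', mul_smul, smul_sub]
    _ = p • d • t := by rw [← ht, add_nsmul, add_sub_cancel_left]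
    _ = q • (m + d) • t := by rw [smul_smul, smul_smul, mul_comm p, ← hp, mul_comm q, hq]
    _ = (m * q) • s := by rw [ht, smul_smul, mul_comm]

section Faces

variable {X : Type} {op : X → X → X} {n : ℕ}

/-- The linear extension of `d_i^{(*_0)} - d_i^{(*)}`, so that the rack boundary is the alternating
sum of these maps (`i` is 0-indexed, as in `dZero` and `dStar`). -/
def faceDifference (op : X → X → X) (n : ℕ) (i : Fin (n + 1)) :
    RackChain X (n + 1) →+ RackChain X n :=
  FreeAbelianGroup.lift fun x =>
    FreeAbelianGroup.of (dZero n i x) - FreeAbelianGroup.of (dStar op n i x)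

@[simp]
lemma faceDifference_of (i : Fin (n + 1)) (x : Fin (n + 1) → X) :
    faceDifference op n i (FreeAbelianGroup.of x) =
      FreeAbelianGroup.of (dZero n i x) - FreeAbelianGroup.of (dStar op n i x) :=
  FreeAbelianGroup.lift_apply_of _ _

lemma rackBoundary_eq_sum_faceDifference :
    rackBoundary op n = ∑ i : Fin (n + 1), (-1 : ℤ) ^ ((i : ℕ) + 1) • faceDifference op n i := by
  ext x
  simp [rackBoundary]

lemma dZero_apply_eq_dStar_apply {i : Fin (n + 1)} {t : Fin n} (hit : (i : ℕ) ≤ t)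
    (x : Fin (n + 1) → X) : dZero n i x t = dStar op n i x t := by
  rw [dZero, dStar, if_neg hit.not_gt, if_neg hit.not_gt]

end Faces

section Filling

variable {X : Type} {op : X → X → X} {n k : ℕ}

/-- The tuple `(y, …, y, x_k, x_{k+1}, …)` in which `y` replaces the first `k` entries of `x`. -/
def fillInit (k : ℕ) (y : X) (x : Fin n → X) : Fin n → X :=
  fun t => if (t : ℕ) < k then y else x t

/-- The tuple `(y, …, y, z, x_k, x_{k+1}, …)` in which `y` replaces the first `k` entries of `x`
and `z` is inserted after them. -/
def fillInsert (k : ℕ) (y z : X) (x : Fin n → X) : Fin (n + 1) → X :=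
  fun t => if _ : (t : ℕ) < k then y else if _ : (t : ℕ) = k then z else x ⟨t - 1, by omega⟩

lemma fillInsert_congr {u v : Fin n → X} (huv : ∀ t : Fin n, k ≤ t → u t = v t) (y z : X) :
    fillInsert k y z u = fillInsert k y z v := by
  grind [fillInsert]

lemma fillInit_zero (y : X) (x : Fin n → X) : fillInit 0 y x = x := by
  ext t
  simp [fillInit]

lemma fillInit_of_le (hk : n ≤ k) (y : X) (x : Fin n → X) : fillInit k y x = fun _ => y := by
  grind [fillInit]

lemma fillInit_succ_apply_self (e : Fin n) (x : Fin n → X) :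
    fillInit (e + 1) (x e) x = fillInit e (x e) x := by
  grind [fillInit]

lemma dZero_fillInsert_of_lt (hidem : ∀ a : X, op a a = a) (y z : X) (x : Fin (n + 1) → X)
    {i : Fin (n + 2)} (hi : (i : ℕ) < k) :
    dZero (n + 1) i (fillInsert k y z x) = dStar op (n + 1) i (fillInsert k y z x) := by
  ext t
  simp only [dZero, dStar, fillInsert, Fin.val_castSucc, Fin.val_succ]
  grind

lemma dZero_fillInsert_self (y z : X) (x : Fin (n + 1) → X) (hk : k < n + 2) :
    dZero (n + 1) ⟨k, hk⟩ (fillInsert k y z x) = fillInit k y x := by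
  ext t
  simp only [dZero, fillInit, fillInsert, Fin.val_castSucc, Fin.val_succ]
  grind

lemma dStar_fillInsert_self (y z : X) (x : Fin (n + 1) → X) (hk : k < n + 2) :
    dStar op (n + 1) ⟨k, hk⟩ (fillInsert k y z x) = fillInit k (op y z) x := by
  ext t
  simp only [dStar, fillInit, fillInsert, Fin.val_castSucc, Fin.val_succ]
  grind

lemma fillInsert_apply_succ (y z : X) (x : Fin n → X) {j : Fin n} (hj : k ≤ j) :
    fillInsert k y z x j.succ = x j := by
  grind [fillInsert]

lemma dZero_succ_fillInsert (y z : X) (x : Fin (n + 1) → X) {j : Fin (n + 1)} (hj : k ≤ j) :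
    dZero (n + 1) j.succ (fillInsert k y z x) = fillInsert k y z (dZero n j x) := by
  ext t
  simp only [dZero, fillInsert, Fin.val_castSucc, Fin.val_succ, Fin.castSucc_mk, Fin.succ_mk]
  grind

lemma dStar_succ_fillInsert (y z : X) (x : Fin (n + 1) → X) {j : Fin (n + 1)} (hj : k ≤ j) :
    dStar op (n + 1) j.succ (fillInsert k y z x) =
      fillInsert k (op y (x j)) (op z (x j)) (dStar op n j x) := by
  ext t
  simp only [dStar, fillInsert_apply_succ y z x hj]
  simp only [dStar, fillInsert, Fin.val_castSucc, Fin.val_succ, Fin.castSucc_mk, Fin.succ_mk]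
  grind

end Filling

section Homotopy

variable {X : Type} {op : X → X → X} {n k : ℕ}

/-- A family `Q` of finite subsets of `X` is equivariant if every right translation `· * c` carries
`Q a` onto `Q (a * c)`; membership is tested both ways because right translations are bijective. -/
def IsEquivariant (op : X → X → X) (Q : X → Finset X) : Prop :=
  ∀ a c y : X, y ∈ Q a ↔ op y c ∈ Q (op a c)

lemma IsEquivariant.sum_op_right {Q : X → Finset X} (hQ : IsEquivariant op Q)
    (hbij : ∀ b : X, Function.Bijective fun x => op x b) {A : Type*} [AddCommMonoid A]
    (f : X → A) (a c : X) : ∑ y ∈ Q a, f (op y c) = ∑ y ∈ Q (op a c), f y :=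
  Finset.sum_bijective (fun y => op y c) (hbij c) (hQ a c) fun _ _ => rfl

lemma isEquivariant_singleton (hbij : ∀ b : X, Function.Bijective fun x => op x b) :
    IsEquivariant op fun a => {a} := fun a c y => by
  simp [(hbij c).1.eq_iff (a := y) (b := a)]

/-- The linear map `x ↦ ∑_{y ∈ B x} (y, …, y, x_k, x_{k+1}, …)`. The maps `R_{k,e}`,
`T_{k,e}` and `S_k` are the cases in which `B x` is `{x e}`, the stabilizer of `x e`, and `X`. -/
def fillSum (k : ℕ) (B : (Fin n → X) → Finset X) : RackChain X n →+ RackChain X n :=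
  FreeAbelianGroup.lift fun x => ∑ y ∈ B x, FreeAbelianGroup.of (fillInit k y x)

variable [Fintype X]

/-- The linear map `x ↦ ∑_{y ∈ B x} ∑_z (y * z, …, y * z, x_k, x_{k+1}, …)` with `z` running over
`X`. -/
def fillOpSum (op : X → X → X) (k : ℕ) (B : (Fin n → X) → Finset X) :
    RackChain X n →+ RackChain X n :=
  FreeAbelianGroup.lift fun x => ∑ y ∈ B x, ∑ z, FreeAbelianGroup.of (fillInit k (op y z) x)

/-- The homotopy `x ↦ ∑_{y ∈ Q (x_e)} ∑_z (y, …, y, z, x_k, x_{k+1}, …)` with `z` running over `X`.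
It is `0` on tuples too short to have an entry `x_e`. -/
def fillHomotopy (Q : X → Finset X) (k e n : ℕ) : RackChain X n →+ RackChain X (n + 1) :=
  FreeAbelianGroup.lift fun x =>
    if h : e < n then ∑ y ∈ Q (x ⟨e, h⟩), ∑ z, FreeAbelianGroup.of (fillInsert k y z x) else 0

lemma fillHomotopy_of {Q : X → Finset X} (e : Fin n) (x : Fin n → X) :
    fillHomotopy Q k e n (FreeAbelianGroup.of x) =
      ∑ y ∈ Q (x e), ∑ z, FreeAbelianGroup.of (fillInsert k y z x) := by
  simp [fillHomotopy]

lemma fillHomotopy_of_congr {Q : X → Finset X} {e i : ℕ} (hik : i ≤ k) (hie : i ≤ e)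
    {u v : Fin n → X} (huv : ∀ t : Fin n, i ≤ t → u t = v t) :
    fillHomotopy Q k e n (FreeAbelianGroup.of u) =
      fillHomotopy Q k e n (FreeAbelianGroup.of v) := by
  have hfill (y z : X) : fillInsert k y z u = fillInsert k y z v :=
    fillInsert_congr (fun t ht => huv t (hik.trans ht)) y z
  obtain hen | hne := lt_or_ge e n
  · simp [fillHomotopy, hen, hfill, huv ⟨e, hen⟩ hie]
  · simp [fillHomotopy, hne.not_gt]

lemma fillHomotopy_comp_faceDifference_of_le {Q : X → Finset X} {e : ℕ} {i : Fin (n + 1)}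
    (hik : (i : ℕ) ≤ k) (hie : (i : ℕ) ≤ e) :
    (fillHomotopy Q k e n).comp (faceDifference op n i) = 0 := by
  ext x
  simp [fillHomotopy_of_congr hik hie fun _ ht =>
    dZero_apply_eq_dStar_apply (op := op) ht x]

lemma faceDifference_comp_fillHomotopy_of_lt {Q : X → Finset X}
    (hidem : ∀ a : X, op a a = a) (e : Fin (n + 1)) {i : Fin (n + 2)} (hi : (i : ℕ) < k) :
    (faceDifference op (n + 1) i).comp (fillHomotopy Q k e (n + 1)) = 0 := by
  ext x
  simp [fillHomotopy_of, dZero_fillInsert_of_lt hidem _ _ x hi]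

lemma faceDifference_comp_fillHomotopy_self {Q : X → Finset X} (e : Fin (n + 1)) (hk : k < n + 2) :
    (faceDifference op (n + 1) ⟨k, hk⟩).comp (fillHomotopy Q k e (n + 1)) =
      Fintype.card X • fillSum k (fun x => Q (x e)) - fillOpSum op k (fun x => Q (x e)) := by
  ext x
  simp [fillHomotopy_of, fillSum, fillOpSum, dZero_fillInsert_self, dStar_fillInsert_self,
    Finset.smul_sum]

lemma faceDifference_succ_fillHomotopy_of {Q : X → Finset X} (hQ : IsEquivariant op Q)
    (hbij : ∀ b : X, Function.Bijective fun x => op x b) (e : Fin (n + 1)) {j : Fin (n + 1)}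
    (hkj : k ≤ j) (x : Fin (n + 1) → X) :
    faceDifference op (n + 1) j.succ (fillHomotopy Q k e (n + 1) (FreeAbelianGroup.of x)) =
      ∑ y ∈ Q (x e), ∑ z, FreeAbelianGroup.of (fillInsert k y z (dZero n j x)) -
        ∑ y ∈ Q (op (x e) (x j)), ∑ z, FreeAbelianGroup.of (fillInsert k y z (dStar op n j x)) := by
  have hz (y : X) : ∑ z, FreeAbelianGroup.of (fillInsert k y (op z (x j)) (dStar op n j x)) =
      ∑ z, FreeAbelianGroup.of (fillInsert k y z (dStar op n j x)) :=
    (hbij (x j)).sum_comp fun z => FreeAbelianGroup.of (fillInsert k y z (dStar op n j x))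
  rw [← hQ.sum_op_right hbij]
  simp [fillHomotopy_of, dZero_succ_fillInsert _ _ x hkj, dStar_succ_fillInsert _ _ x hkj, hz]

lemma faceDifference_succ_comp_fillHomotopy {Q : X → Finset X} (hQ : IsEquivariant op Q)
    (hidem : ∀ a : X, op a a = a) (hbij : ∀ b : X, Function.Bijective fun x => op x b)
    {e j : Fin (n + 1)} (hek : (e : ℕ) ≤ k) (hkj : k ≤ j) :
    (faceDifference op (n + 1) j.succ).comp (fillHomotopy Q k e (n + 1)) =
      (fillHomotopy Q k e n).comp (faceDifference op n j) := by
  obtain rfl | hej := (Fin.le_def.2 (hek.trans hkj)).eq_or_lt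
  · obtain rfl : k = e := le_antisymm hkj hek
    rw [fillHomotopy_comp_faceDifference_of_le le_rfl le_rfl]
    ext x
    have hfill (y z : X) : fillInsert e y z (dZero n e x) = fillInsert e y z (dStar op n e x) :=
      fillInsert_congr (fun t ht => dZero_apply_eq_dStar_apply ht x) y z
    simp [faceDifference_succ_fillHomotopy_of hQ hbij e le_rfl, hidem, hfill]
  · ext x
    have hen : (e : ℕ) < n := by omega
    have hZero : dZero n j x ⟨e, hen⟩ = x e := if_pos hej
    have hStar : dStar op n j x ⟨e, hen⟩ = op (x e) (x j) := if_pos hej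
    simp only [AddMonoidHom.comp_apply, faceDifference_succ_fillHomotopy_of hQ hbij e hkj,
      faceDifference_of, map_sub, ← hStar]
    rw [← hZero, ← fillHomotopy_of ⟨e, hen⟩, ← fillHomotopy_of ⟨e, hen⟩]

lemma succAbove_faceDifference_fillHomotopy_cancel {Q : X → Finset X} (hQ : IsEquivariant op Q)
    (hidem : ∀ a : X, op a a = a) (hbij : ∀ b : X, Function.Bijective fun x => op x b)
    {e : Fin (n + 1)} (hek : (e : ℕ) ≤ k) (hke : k ≤ e + 1) (p : Fin (n + 2)) (hp : (p : ℕ) = k)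
    (j : Fin (n + 1)) :
    (-1 : ℤ) ^ ((p.succAbove j : ℕ) + 1) •
        (faceDifference op (n + 1) (p.succAbove j)).comp (fillHomotopy Q k e (n + 1)) +
      (-1 : ℤ) ^ ((j : ℕ) + 1) • (fillHomotopy Q k e n).comp (faceDifference op n j) = 0 := by
  subst hp
  obtain hjk | hkj := lt_or_ge (j : ℕ) p
  · rw [Fin.succAbove_of_castSucc_lt p j hjk,
      faceDifference_comp_fillHomotopy_of_lt hidem e hjk,
      fillHomotopy_comp_faceDifference_of_le hjk.le (by omega), smul_zero, smul_zero, add_zero]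
  · rw [Fin.succAbove_of_le_castSucc p j hkj,
      faceDifference_succ_comp_fillHomotopy hQ hidem hbij hek hkj, Fin.val_succ, pow_succ]
    module

theorem rackBoundary_fillHomotopy_add {Q : X → Finset X} (hQ : IsEquivariant op Q)
    (hidem : ∀ a : X, op a a = a) (hbij : ∀ b : X, Function.Bijective fun x => op x b)
    {e : Fin (n + 1)} (hek : (e : ℕ) ≤ k) (hke : k ≤ e + 1) (w : RackChain X (n + 1)) :
    rackBoundary op (n + 1) (fillHomotopy Q k e (n + 1) w) +
        fillHomotopy Q k e n (rackBoundary op n w) =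
      (-1 : ℤ) ^ (k + 1) •
        (Fintype.card X • fillSum k (fun x => Q (x e)) w -
          fillOpSum op k (fun x => Q (x e)) w) := by
  let p : Fin (n + 2) := ⟨k, by omega⟩
  have hcancel (j : Fin (n + 1)) := DFunLike.congr_fun
    (succAbove_faceDifference_fillHomotopy_cancel hQ hidem hbij hek hke p rfl j) w
  have hself := DFunLike.congr_fun
    (faceDifference_comp_fillHomotopy_self (op := op) (Q := Q) e p.isLt) w
  simp only [AddMonoidHom.add_apply, AddMonoidHom.sub_apply, AddMonoidHom.smul_apply,
    AddMonoidHom.comp_apply, AddMonoidHom.zero_apply] at hcancel hself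
  rw [← hself]
  simp only [rackBoundary_eq_sum_faceDifference, AddMonoidHom.finsetSum_apply,
    AddMonoidHom.smul_apply, map_sum, map_zsmul]
  rw [Fin.sum_univ_succAbove _ p, add_assoc, ← Finset.sum_add_distrib,
    Finset.sum_eq_zero fun j _ => hcancel j, add_zero]

end Homotopy

section Classes

variable {X : Type} {op : X → X → X} {n : ℕ}

/-- The class of a chain modulo boundaries. Chains need not be cycles here: `fillSum` does not
preserve cycles in general. -/
def modBoundaries (op : X → X → X) (n : ℕ) :
    RackChain X (n + 1) →+ RackChain X (n + 1) ⧸ (rackBoundary op (n + 1)).range :=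
  QuotientAddGroup.mk' _

lemma nsmul_mk_eq_zero_iff {w : RackChain X (n + 1)} (hw : w ∈ rackCycles op n) (c : ℕ) :
    c • (QuotientAddGroup.mk ⟨w, hw⟩ : rackHomology op n) = 0 ↔ c • modBoundaries op n w = 0 := by
  rw [← map_nsmul, modBoundaries, QuotientAddGroup.mk'_apply, QuotientAddGroup.eq_zero_iff]
  exact QuotientAddGroup.eq_zero_iff (N := rackBoundaries op n) (c • (⟨w, hw⟩ : rackCycles op n))

lemma modBoundaries_card_nsmul_fillSum [Fintype X] {Q : X → Finset X} (hQ : IsEquivariant op Q)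
    (hidem : ∀ a : X, op a a = a) (hbij : ∀ b : X, Function.Bijective fun x => op x b)
    {k : ℕ} {e : Fin (n + 1)} (hek : (e : ℕ) ≤ k) (hke : k ≤ e + 1)
    {w : RackChain X (n + 1)} (hw : w ∈ rackCycles op n) :
    Fintype.card X • modBoundaries op n (fillSum k (fun x => Q (x e)) w) =
      modBoundaries op n (fillOpSum op k (fun x => Q (x e)) w) := by
  have hhom := rackBoundary_fillHomotopy_add hQ hidem hbij hek hke w
  rw [(rackBoundary op n).mem_ker.1 hw, map_zero, add_zero] at hhom
  have hmem : Fintype.card X • fillSum k (fun x => Q (x e)) w -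
      fillOpSum op k (fun x => Q (x e)) w ∈ (rackBoundary op (n + 1)).range := by
    obtain hsign | hsign := neg_one_pow_eq_or ℤ (k + 1)
    · exact ⟨_, by rw [hhom, hsign, one_smul]⟩
    · exact neg_mem_iff.1 ⟨_, by rw [hhom, hsign, neg_one_smul]⟩
  rw [← map_nsmul]
  exact QuotientAddGroup.eq_iff_sub_mem.2 hmem

lemma fillSum_univ_rackBoundary [Fintype X] {k : ℕ} (hk : n ≤ k) (v : RackChain X (n + 1)) :
    fillSum k (fun _ => Finset.univ) (rackBoundary op n v) = 0 := by
  suffices (fillSum k fun _ : Fin n → X => Finset.univ).comp (rackBoundary op n) = 0 from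
    DFunLike.congr_fun this v
  ext x
  simp [rackBoundary, fillSum, fillInit_of_le hk]

lemma fillSum_univ_eq_zero_of_nsmul_modBoundaries_eq_zero [Fintype X] {k c : ℕ} (hk : n + 1 ≤ k)
    (hc : c ≠ 0) {w : RackChain X (n + 1)} (hw : c • modBoundaries op n w = 0) :
    fillSum k (fun _ => Finset.univ) w = 0 := by
  rw [← map_nsmul] at hw
  obtain ⟨v, hv⟩ := (QuotientAddGroup.eq_zero_iff _).1 hw
  have hcS : c • fillSum k (fun _ => Finset.univ) w = 0 := by
    rw [← map_nsmul, ← hv, fillSum_univ_rackBoundary hk]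
  rw [← FreeAbelianGroup.support_eq_empty] at hcS ⊢
  rwa [FreeAbelianGroup.support_nsmul c hc] at hcS

lemma fillSum_singleton_zero :
    fillSum 0 (fun x : Fin (n + 1) → X => {x 0}) = AddMonoidHom.id _ := by
  ext x
  simp [fillSum, fillInit_zero]

lemma fillSum_singleton_succ (e : Fin n) :
    fillSum (e + 1) (fun x : Fin n → X => {x e}) = fillSum e (fun x => {x e}) := by
  ext x
  simp [fillSum, fillInit_succ_apply_self]

end Classes

section Stabilizers

variable {X : Type} [Fintype X] [DecidableEq X] {op : X → X → X}

/-- The stabilizer `S_a`: the elements `x` with `a * x = a`. -/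
def stabilizerFinset (op : X → X → X) (a : X) : Finset X :=
  Finset.univ.filter fun x => op a x = a

@[simp]
lemma mem_stabilizerFinset {a x : X} : x ∈ stabilizerFinset op a ↔ op a x = a := by
  simp [stabilizerFinset]

lemma stabilizerFinset_eq_of_mem (hidem : ∀ a : X, op a a = a)
    (htriv : ∀ a x y : X, op a x = a → op a y = a → op x y = x) {a y : X}
    (hy : y ∈ stabilizerFinset op a) : stabilizerFinset op y = stabilizerFinset op a := by
  rw [mem_stabilizerFinset] at hy
  ext v
  simp only [mem_stabilizerFinset]
  exact ⟨htriv y a v (htriv a y a hy (hidem a)), htriv a y v hy⟩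

lemma isEquivariant_stabilizerFinset (hbij : ∀ b : X, Function.Bijective fun x => op x b)
    (hdist : ∀ a b c : X, op (op a b) c = op (op a c) (op b c)) :
    IsEquivariant op (stabilizerFinset op) := fun a c y => by
  rw [mem_stabilizerFinset, mem_stabilizerFinset, ← hdist]
  exact ((hbij c).1.eq_iff (a := op a y) (b := a)).symm

lemma sum_op_left_compl_stabilizerFinset {a : X} (hidem : op a a = a)
    (hsol : ∀ b : X, op a b ≠ a → ∃ x : X, op a x = b) {A : Type*} [AddCommMonoid A]
    (f : X → A) :
    ∑ z ∈ (stabilizerFinset op a)ᶜ, f (op a z) = ∑ v ∈ (stabilizerFinset op a)ᶜ, f v := by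
  set C := (stabilizerFinset op a)ᶜ with hC
  have hmem (b : X) : b ∈ C ↔ op a b ≠ a := by simp [hC]
  have hsub : C ⊆ C.image (op a) := by
    intro b hb
    obtain ⟨x, rfl⟩ := hsol b ((hmem b).1 hb)
    refine Finset.mem_image_of_mem _ ((hmem x).2 fun hx => (hmem _).1 hb ?_)
    rw [hx, hidem]
  have himage : C.image (op a) = C :=
    (Finset.eq_of_subset_of_card_le hsub Finset.card_image_le).symm
  have hinj : Set.InjOn (op a) C := Finset.card_image_iff.1 (congrArg Finset.card himage)
  rw [← Finset.sum_image hinj, himage]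

lemma sum_op_left {a : X} (hidem : op a a = a)
    (hsol : ∀ b : X, op a b ≠ a → ∃ x : X, op a x = b) {A : Type*} [AddCommGroup A] (f : X → A) :
    ∑ z, f (op a z) =
      (stabilizerFinset op a).card • f a + (∑ v, f v - ∑ v ∈ stabilizerFinset op a, f v) := by
  have hstab : ∑ z ∈ stabilizerFinset op a, f (op a z) = (stabilizerFinset op a).card • f a :=
    Finset.sum_eq_card_nsmul fun z hz => by rw [mem_stabilizerFinset.1 hz]
  rw [← Finset.sum_add_sum_compl (stabilizerFinset op a) fun z => f (op a z), hstab,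
    sum_op_left_compl_stabilizerFinset hidem hsol, eq_sub_of_add_eq' (Finset.sum_add_sum_compl _ f)]

lemma fillOpSum_singleton {m n : ℕ} (hidem : ∀ a : X, op a a = a)
    (hstab : ∀ a : X, (stabilizerFinset op a).card = m)
    (hsol : ∀ a b : X, op a b ≠ a → ∃ x : X, op a x = b) (k : ℕ) (e : Fin n) :
    fillOpSum op k (fun x => {x e}) = m • fillSum k (fun x => {x e}) +
      (fillSum k (fun _ => Finset.univ) - fillSum k fun x => stabilizerFinset op (x e)) := by
  ext x
  simp [fillOpSum, fillSum, hstab,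
    sum_op_left (hidem _) (hsol _) fun v => FreeAbelianGroup.of (fillInit k v x)]

lemma fillOpSum_stabilizerFinset {m n : ℕ} (hidem : ∀ a : X, op a a = a)
    (hstab : ∀ a : X, (stabilizerFinset op a).card = m)
    (hsol : ∀ a b : X, op a b ≠ a → ∃ x : X, op a x = b)
    (htriv : ∀ a x y : X, op a x = a → op a y = a → op x y = x) (k : ℕ) (e : Fin n) :
    fillOpSum op k (fun x => stabilizerFinset op (x e)) = m • fillSum k fun _ => Finset.univ := by
  ext x
  let f (v : X) : RackChain X n := FreeAbelianGroup.of (fillInit k v x)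
  let S := stabilizerFinset op (x e)
  suffices ∑ y ∈ S, ∑ z, f (op y z) = m • ∑ v, f v by simpa [fillOpSum, fillSum] using this
  calc ∑ y ∈ S, ∑ z, f (op y z) = ∑ y ∈ S, (m • f y + (∑ v, f v - ∑ v ∈ S, f v)) :=
        Finset.sum_congr rfl fun y hy => by
          rw [sum_op_left (hidem y) (hsol y) f, hstab, stabilizerFinset_eq_of_mem hidem htriv hy]
    _ = m • ∑ v, f v := by
        rw [Finset.sum_add_distrib, ← Finset.smul_sum, Finset.sum_const, hstab, smul_sub,
          add_sub_cancel]

lemma mul_lcm_nsmul_modBoundaries_fillSum_singleton {m n k : ℕ} (hidem : ∀ a : X, op a a = a)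
    (hbij : ∀ b : X, Function.Bijective fun x => op x b)
    (hdist : ∀ a b c : X, op (op a b) c = op (op a c) (op b c))
    (hstab : ∀ a : X, (stabilizerFinset op a).card = m)
    (hsol : ∀ a b : X, op a b ≠ a → ∃ x : X, op a x = b)
    (htriv : ∀ a x y : X, op a x = a → op a y = a → op x y = x)
    {e : Fin (n + 1)} (hek : (e : ℕ) ≤ k) (hke : k ≤ e + 1)
    {w : RackChain X (n + 1)} (hw : w ∈ rackCycles op n) :
    (m * Nat.lcm (Fintype.card X) (Fintype.card X - m)) •
        modBoundaries op n (fillSum k (fun x => {x e}) w) =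
      (m * (Nat.lcm (Fintype.card X) (Fintype.card X - m) / Fintype.card X)) •
        modBoundaries op n (fillSum k (fun _ => Finset.univ) w) := by
  apply mul_lcm_nsmul_eq_of_nsmul_eq
    (t := modBoundaries op n (fillSum k (fun x => stabilizerFinset op (x e)) w))
  · rw [modBoundaries_card_nsmul_fillSum (isEquivariant_singleton hbij) hidem hbij hek hke hw,
      fillOpSum_singleton hidem hstab hsol]
    simp
  · rw [modBoundaries_card_nsmul_fillSum (isEquivariant_stabilizerFinset hbij hdist) hidem hbij
      hek hke hw, fillOpSum_stabilizerFinset hidem hstab hsol htriv]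
    simp

theorem mul_lcm_nsmul_modBoundaries {m n : ℕ} (hidem : ∀ a : X, op a a = a)
    (hbij : ∀ b : X, Function.Bijective fun x => op x b)
    (hdist : ∀ a b c : X, op (op a b) c = op (op a c) (op b c))
    (hstab : ∀ a : X, (stabilizerFinset op a).card = m)
    (hsol : ∀ a b : X, op a b ≠ a → ∃ x : X, op a x = b)
    (htriv : ∀ a x y : X, op a x = a → op a y = a → op x y = x)
    {w : RackChain X (n + 1)} (hw : w ∈ rackCycles op n) :
    (m * Nat.lcm (Fintype.card X) (Fintype.card X - m)) • modBoundaries op n w =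
      (m * (Nat.lcm (Fintype.card X) (Fintype.card X - m) / Fintype.card X)) •
        modBoundaries op n (fillSum (n + 1) (fun _ => Finset.univ) w) := by
  set N := m * Nat.lcm (Fintype.card X) (Fintype.card X - m)
  set M := m * (Nat.lcm (Fintype.card X) (Fintype.card X - m) / Fintype.card X)
  have hfill {k : ℕ} {e : Fin (n + 1)} (hek : (e : ℕ) ≤ k) (hke : k ≤ e + 1) :
      N • modBoundaries op n (fillSum k (fun x => {x e}) w) =
        M • modBoundaries op n (fillSum k (fun _ => Finset.univ) w) :=
    mul_lcm_nsmul_modBoundaries_fillSum_singleton hidem hbij hdist hstab hsol htriv hek hke hw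
  have hself (e : Fin (n + 1)) : N • modBoundaries op n w =
      N • modBoundaries op n (fillSum e (fun x => {x e}) w) := by
    induction e using Fin.induction with
    | zero => rw [Fin.val_zero, fillSum_singleton_zero, AddMonoidHom.id_apply]
    | succ e ih =>
      rw [ih, hfill (e := e.succ) le_rfl (Nat.le_succ _), Fin.val_succ, ← Fin.val_castSucc e,
        ← fillSum_singleton_succ, hfill (Nat.le_succ _) le_rfl]
  rw [hself (Fin.last n), ← fillSum_singleton_succ, hfill (Nat.le_succ _) le_rfl, Fin.val_last]

end Stabilizers

/-- For a finite `m`-almost quasigroup quandle `X` all of whose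
stabilizers are trivial subquandles, the torsion subgroup of every rack
homology group `H_n^R(X)` (`n ≥ 1`) is annihilated by
`N = m · lcm(|X|, |X| - m)`. -/
theorem mAQ_trivial_stabilizers_torsion_annihilated
    {X : Type} [Fintype X] [DecidableEq X] (op : X → X → X) (m : ℕ)
    (hm : 1 ≤ m)
    (hidem : ∀ a : X, op a a = a)
    (hbij : ∀ b : X, Function.Bijective fun x => op x b)
    (hdist : ∀ a b c : X, op (op a b) c = op (op a c) (op b c))
    (hstab : ∀ a : X, (Finset.univ.filter fun x => op a x = a).card = m)
    (hsol : ∀ a b : X, op a b ≠ a → ∃! x : X, op a x = b)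
    (htriv : ∀ a x y : X, op a x = a → op a y = a → op x y = x) :
    ∀ n : ℕ, ∀ h : rackHomology op n,
      (∃ k : ℕ, k ≠ 0 ∧ k • h = 0) →
        (m * Nat.lcm (Fintype.card X) (Fintype.card X - m)) • h = 0 := by
  rintro n h ⟨c, hc, hch⟩
  obtain ⟨⟨w, hw⟩, rfl⟩ := QuotientAddGroup.mk_surjective h
  have htorsion : c • modBoundaries op n w = 0 := (nsmul_mk_eq_zero_iff hw c).1 hch
  refine (nsmul_mk_eq_zero_iff hw _).2 ?_
  rw [mul_lcm_nsmul_modBoundaries hidem hbij hdist hstab (fun a b hb => (hsol a b hb).exists)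
    htriv hw, fillSum_univ_eq_zero_of_nsmul_modBoundaries_eq_zero le_rfl hc htorsion, map_zero,
    smul_zero]
end
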